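/- Let λ₁,…,λ_s ∈ 𝕋 have the property that their only multiplicative relation is trivial, i.e., λ₁^{n₁}⋯λ_s^{n_s} = 1 with n_i ∈ ℤ implies n₁ = … = n_s = 0. Then the orbit { (λ₁ⁿ,…,λ_sⁿ) : n ∈ ℕ } is dense in the full torus 𝕋^s. -/

import Mathlib

/-!
A subgroup `K` of the torus on which no nontrivial character is trivial has the same character
integrals as the torus: for normalized Haar measure on either group the trivial character
integrates to `1` and every other one to `0`. By Stone–Weierstrass the two measures then agree on
all continuous functions, so a closed such `K` is everything, since otherwise a bump function
vanishing on `K` would have positive integral. Multiplicative independence says precisely that no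
nontrivial character is trivial on the powers of `(λᵢ)`, and in a compact group the natural and the
integer powers of an element have the same closure.
-/

open MeasureTheory Measure TopologicalSpace

section Integration

variable {X E 𝕜 : Type*} [TopologicalSpace X] [CompactSpace X] [MeasurableSpace X] [BorelSpace X]
  [NormedAddCommGroup E] [NormedSpace ℝ E] [SecondCountableTopologyEither X E]

theorem continuous_integral_continuousMap (μ : Measure X) [IsFiniteMeasure μ] :
    Continuous fun f : C(X, E) => ∫ x, f x ∂μ :=
  (continuous_integral.comp (ContinuousMap.toLp 1 μ ℝ).continuous).congr fun f =>
    integral_congr_ae (ContinuousMap.coeFn_toLp μ f)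

theorem integral_eq_of_dense_span [RCLike 𝕜] [NormedSpace 𝕜 E] [SMulCommClass ℝ 𝕜 E]
    {μ ν : Measure X} [IsFiniteMeasure μ] [IsFiniteMeasure ν] {S : Set C(X, E)}
    (hS : Dense (Submodule.span 𝕜 S : Set C(X, E)))
    (h : ∀ f ∈ S, ∫ x, f x ∂μ = ∫ x, f x ∂ν) (f : C(X, E)) :
    ∫ x, f x ∂μ = ∫ x, f x ∂ν := by
  have integrable (ρ : Measure X) [IsFiniteMeasure ρ] (g : C(X, E)) : Integrable g ρ :=
    g.continuous.integrable_of_hasCompactSupport (.of_compactSpace g)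
  refine congrFun ((continuous_integral_continuousMap μ).ext_on hS
    (continuous_integral_continuousMap ν) fun g hg => ?_) f
  dsimp only
  induction hg using Submodule.span_induction with
  | mem g hg => exact h g hg
  | zero => simp
  | add g₁ g₂ _ _ h₁ h₂ =>
    simp only [ContinuousMap.add_apply]
    rw [integral_add (integrable μ g₁) (integrable μ g₂),
      integral_add (integrable ν g₁) (integrable ν g₂), h₁, h₂]
  | smul c g _ hg => simp only [ContinuousMap.smul_apply, integral_smul, hg]

end Integration

section Characters

theorem integral_monoidHom_circle_eq_zero {G : Type*} [Group G] [MeasurableSpace G]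
    [MeasurableMul G] {μ : Measure G} [μ.IsMulLeftInvariant] {χ : G →* Circle} (hχ : χ ≠ 1) :
    ∫ x, (χ x : ℂ) ∂μ = 0 := by
  obtain ⟨a, ha⟩ : ∃ a, χ a ≠ 1 := DFunLike.ne_iff.mp hχ
  have translate : (χ a : ℂ) * ∫ x, (χ x : ℂ) ∂μ = ∫ x, (χ x : ℂ) ∂μ := by
    rw [← integral_const_mul, ← integral_mul_left_eq_self (fun x => (χ x : ℂ)) a]
    simp only [map_mul, Circle.coe_mul]
  exact (mul_left_eq_self₀.mp translate).resolve_left (Circle.coe_eq_one.not.mpr ha)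

variable {G : Type*} [Group G] [TopologicalSpace G]

/-- The complex-valued continuous function underlying a character of `G`. It is bundled as a monoid
homomorphism, so that a group of characters has a multiplicatively closed image. -/
noncomputable def characterFunction : (G →ₜ* Circle) →* C(G, ℂ) where
  toFun χ := ⟨fun x => χ x, by fun_prop⟩
  map_one' := by ext; simp
  map_mul' χ ψ := by ext; simp

theorem characterFunction_apply (χ : G →ₜ* Circle) (x : G) :
    characterFunction χ x = χ x := rfl

theorem star_characterFunction (χ : G →ₜ* Circle) :
    star (characterFunction χ) = characterFunction χ⁻¹ := by
  ext x
  exact (Circle.coe_inv_eq_conj (χ x)).symm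

variable [CompactSpace G] {Γ : Subgroup (G →ₜ* Circle)}

theorem dense_span_characterFunction
    (hΓ : ((⇑) '' (Γ : Set (G →ₜ* Circle))).SeparatesPoints) :
    Dense (Submodule.span ℂ (characterFunction '' (Γ : Set (G →ₜ* Circle))) : Set C(G, ℂ)) := by
  let S : Submonoid C(G, ℂ) := Γ.toSubmonoid.map characterFunction
  have star_subset : star (S : Set C(G, ℂ)) ⊆ S := by
    rintro f ⟨χ, hχ, hf⟩
    exact ⟨χ⁻¹, Γ.inv_mem hχ, by rw [← star_characterFunction, hf, star_star]⟩
  have span_eq : Subalgebra.toSubmodule (StarAlgebra.adjoin ℂ (S : Set C(G, ℂ))).toSubalgebra =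
      Submodule.span ℂ S := by
    rw [StarAlgebra.adjoin_eq_span, Set.union_eq_left.mpr star_subset, Submonoid.closure_eq]
  have separates : (StarAlgebra.adjoin ℂ (S : Set C(G, ℂ))).SeparatesPoints := by
    intro x y hxy
    obtain ⟨_, ⟨χ, hχ, rfl⟩, hne⟩ := hΓ hxy
    exact ⟨_, ⟨characterFunction χ, StarAlgebra.subset_adjoin ℂ _ ⟨χ, hχ, rfl⟩, rfl⟩,
      Circle.coe_injective.ne hne⟩
  have dense_adjoin : Dense (StarAlgebra.adjoin ℂ (S : Set C(G, ℂ)) : Set C(G, ℂ)) := by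
    rw [dense_iff_closure_eq, ← StarSubalgebra.topologicalClosure_coe,
      ContinuousMap.starSubalgebra_topologicalClosure_eq_top_of_separatesPoints _ separates,
      StarSubalgebra.coe_top]
  change Dense (Submodule.span ℂ (S : Set C(G, ℂ)) : Set C(G, ℂ))
  rwa [← span_eq]

variable [IsTopologicalGroup G]

/-- The Haar measure of a compact group, normalized to total mass `1`. -/
noncomputable abbrev haarProbability (G : Type*) [Group G] [TopologicalSpace G]
    [IsTopologicalGroup G] [CompactSpace G] [MeasurableSpace G] [BorelSpace G] : Measure G :=
  haarMeasure (⊤ : PositiveCompacts G)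

instance [MeasurableSpace G] [BorelSpace G] : IsProbabilityMeasure (haarProbability G) :=
  ⟨haarMeasure_self⟩

theorem integral_haarProbability_eq_integral_subgroup [MeasurableSpace G] [BorelSpace G]
    (hΓ : ((⇑) '' (Γ : Set (G →ₜ* Circle))).SeparatesPoints) {K : Subgroup G} [CompactSpace K]
    (hK : ∀ χ ∈ Γ, (∀ x ∈ K, χ x = 1) → χ = 1) (f : C(G, ℂ)) :
    ∫ x, f x ∂haarProbability G = ∫ x : K, f x ∂haarProbability K := by
  have integral_map_subtype (g : C(G, ℂ)) :
      ∫ x, g x ∂(haarProbability K).map (↑) = ∫ x : K, g x ∂haarProbability K :=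
    integral_map measurable_subtype_coe.aemeasurable g.continuous.aestronglyMeasurable
  rw [← integral_map_subtype]
  refine integral_eq_of_dense_span (dense_span_characterFunction hΓ) ?_ f
  rintro _ ⟨χ, hχ, rfl⟩
  rw [integral_map_subtype]
  simp only [characterFunction_apply]
  by_cases hχ_one : χ = 1
  · simp [hχ_one]
  have ne_one : (χ : G →* Circle) ≠ 1 := fun h =>
    hχ_one (DFunLike.ext χ 1 fun x => DFunLike.congr_fun h x)
  have restrict_ne_one : (χ : G →* Circle).comp K.subtype ≠ 1 := fun h =>
    hχ_one (hK χ hχ fun x hx => DFunLike.congr_fun h ⟨x, hx⟩)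
  exact (integral_monoidHom_circle_eq_zero ne_one).trans
    (integral_monoidHom_circle_eq_zero restrict_ne_one).symm

theorem eq_top_of_isClosed_of_forall_character
    (hΓ : ((⇑) '' (Γ : Set (G →ₜ* Circle))).SeparatesPoints) {K : Subgroup G}
    (hK_closed : IsClosed (K : Set G)) (hK : ∀ χ ∈ Γ, (∀ x ∈ K, χ x = 1) → χ = 1) : K = ⊤ := by
  borelize G
  have : CompactSpace K := isCompact_iff_compactSpace.mp hK_closed.isCompact
  rw [Subgroup.eq_top_iff']
  by_contra! ⟨x, hx⟩
  obtain ⟨f, hf_x, hf_K, hf_supp, hf⟩ := exists_continuous_one_zero_of_isCompact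
    (isCompact_singleton (x := x)) hK_closed (Set.disjoint_singleton_left.mpr hx)
  have integral_pos : 0 < ∫ y, f y ∂haarProbability G :=
    f.continuous.integral_pos_of_hasCompactSupport_nonneg_nonzero hf_supp (fun y => (hf y).1)
      (x := x) (by simp [hf_x rfl])
  have integral_eq_zero : ∫ y, (f y : ℂ) ∂haarProbability G = 0 := by
    refine (integral_haarProbability_eq_integral_subgroup hΓ hK
      ⟨fun y => (f y : ℂ), by fun_prop⟩).trans ?_
    simp [fun y : K => hf_K y.2]
  exact integral_pos.ne' (by exact_mod_cast integral_complex_ofReal.symm.trans integral_eq_zero)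

theorem denseRange_pow_of_forall_character
    (hΓ : ((⇑) '' (Γ : Set (G →ₜ* Circle))).SeparatesPoints) {a : G}
    (ha : ∀ χ ∈ Γ, χ a = 1 → χ = 1) : DenseRange fun n : ℕ => a ^ n := by
  have closure_eq_top : (Subgroup.zpowers a).topologicalClosure = ⊤ :=
    eq_top_of_isClosed_of_forall_character hΓ (Subgroup.isClosed_topologicalClosure _)
      fun χ hχ h => ha χ hχ (h a (subset_closure (Subgroup.mem_zpowers a)))
  rw [← denseRange_zpow_iff_pow]
  exact dense_iff_closure_eq.mpr (congrArg SetLike.coe closure_eq_top)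

end Characters

section Torus

variable {ι : Type*}

/-- The `i`-th coordinate of the torus, as a character; these generate the characters
`z ↦ ∏ zᵢ ^ nᵢ`. -/
noncomputable def coordinateCharacter (i : ι) : (ι → Circle) →ₜ* Circle :=
  ⟨Pi.evalMonoidHom (fun _ => Circle) i, continuous_apply i⟩

theorem separatesPoints_closure_coordinateCharacter :
    ((⇑) '' (Subgroup.closure (Set.range (coordinateCharacter (ι := ι))) :
      Set ((ι → Circle) →ₜ* Circle))).SeparatesPoints := by
  intro z w hzw
  obtain ⟨i, hi⟩ := Function.ne_iff.mp hzw
  exact ⟨_, ⟨coordinateCharacter i, Subgroup.subset_closure ⟨i, rfl⟩, rfl⟩, hi⟩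

theorem finsuppProd_coordinateCharacter_apply (n : ι →₀ ℤ) (z : ι → Circle) :
    n.prod (fun i k => coordinateCharacter i ^ k) z = n.prod (fun i k => z i ^ k) := by
  let evalAt : ((ι → Circle) →ₜ* Circle) →* Circle :=
    { toFun χ := χ z, map_one' := rfl, map_mul' _ _ := rfl }
  exact (map_finsuppProd evalAt n _).trans
    (Finsupp.prod_congr fun i _ => map_zpow evalAt (coordinateCharacter i) (n i))

theorem denseRange_pow_of_forall_finsuppProd_zpow {a : ι → Circle}
    (ha : ∀ n : ι →₀ ℤ, n.prod (fun i k => a i ^ k) = 1 → n = 0) :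
    DenseRange fun n : ℕ => a ^ n := by
  refine denseRange_pow_of_forall_character separatesPoints_closure_coordinateCharacter
    fun χ hχ hχa => ?_
  obtain ⟨n, rfl⟩ := Subgroup.exists_finsupp_of_mem_closure_range _ _ hχ
  rw [finsuppProd_coordinateCharacter_apply] at hχa
  rw [ha n hχa, Finsupp.prod_zero_index]

theorem circle_coe_finsuppProd_zpow (n : ι →₀ ℤ) (z : ι → Circle) :
    ((n.prod fun i k => z i ^ k : Circle) : ℂ) = n.prod fun i k => (z i : ℂ) ^ k :=
  (map_finsuppProd Circle.coeHom n _).trans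
    (Finsupp.prod_congr fun i _ => Circle.coe_zpow (z i) (n i))

theorem range_pi_circle_coe :
    Set.range (fun (z : ι → Circle) i => (z i : ℂ)) = {μ : ι → ℂ | ∀ i, ‖μ i‖ = 1} := by
  ext μ
  refine ⟨?_, fun hμ => ⟨fun i => ⟨μ i, mem_sphere_zero_iff_norm.mpr (hμ i)⟩, rfl⟩⟩
  rintro ⟨z, rfl⟩ i
  exact Circle.norm_coe (z i)

end Torus

theorem orbit_dense_of_multiplicatively_independent_general {ι : Type*} (lam : ι → ℂ)
    (hlam : ∀ i, ‖lam i‖ = 1)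
    (hindep : ∀ n : ι →₀ ℤ, n.prod (fun i k => lam i ^ k) = 1 → n = 0) :
    closure {z : ι → ℂ | ∃ n : ℕ, z = fun i => lam i ^ n} =
      {μ : ι → ℂ | ∀ i, ‖μ i‖ = 1} := by
  let coe : (ι → Circle) → ι → ℂ := fun z i => z i
  have coe_continuous : Continuous coe := by fun_prop
  obtain ⟨a, rfl⟩ : lam ∈ Set.range coe := range_pi_circle_coe.ge hlam
  have dense : DenseRange fun n : ℕ => a ^ n :=
    denseRange_pow_of_forall_finsuppProd_zpow fun n hn => hindep n <| by
      rw [← circle_coe_finsuppProd_zpow, hn, Circle.coe_one]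
  have orbit_eq : {z : ι → ℂ | ∃ n : ℕ, z = fun i => coe a i ^ n} =
      coe '' Set.range fun n : ℕ => a ^ n := by
    rw [← Set.range_comp]
    ext z
    exact exists_congr fun n => eq_comm
  rw [orbit_eq, coe_continuous.isClosedMap.closure_image_eq_of_continuous coe_continuous,
    dense.closure_range, Set.image_univ]
  exact range_pi_circle_coe

theorem orbit_dense_of_multiplicatively_independent (s : ℕ) (lam : Fin s → ℂ)
    (hlam : ∀ i, ‖lam i‖ = 1)
    (hindep : ∀ n : Fin s → ℤ, (∏ i, lam i ^ n i) = 1 → ∀ i, n i = 0) :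
    closure {z : Fin s → ℂ | ∃ n : ℕ, z = fun i => lam i ^ n} =
      {μ : Fin s → ℂ | ∀ i, ‖μ i‖ = 1} :=
  orbit_dense_of_multiplicatively_independent_general lam hlam fun n hn =>
    Finsupp.ext (hindep n (by rwa [n.prod_fintype _ fun i => zpow_zero (lam i)] at hn))
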